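/- Let H be a finite simple graph and let τ and τ' be two vertex-disjoint triangles in H whose six edges all belong to a common strong clique of H. Then at least one of the following holds: (T1) one of the two triangles dominates the other, meaning that each vertex of one triangle is adjacent in H to some vertex of the other triangle; or (T2) there are two vertices of τ and two vertices of τ' which together induce a complete graph K₄ in H. -/

import Mathlib

/-!
If neither triangle dominates the other, some vertex `z` of the first has no neighbour in the
second, and some `z'` of the second has none in the first. For every other vertex `x` of the
first triangle and `x'` of the second, the edges `zx` and `z'x'` are disjoint members of the
strong clique, so an edge of `H` joins them; the choice of `z` and `z'` leaves only `xx'`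
(`adj_of_isolated`). Hence the two remaining vertices of each triangle induce a `K₄`.
-/

/-- A strong clique of `G`: a set of edges of `G` every two of which are incident or
joined by an edge of `G`. -/
def IsStrongCliqueSet {α : Type} (G : SimpleGraph α) (S : Set (Sym2 α)) : Prop :=
  S ⊆ G.edgeSet ∧
    ∀ e ∈ S, ∀ f ∈ S, e ≠ f →
      (∃ x, x ∈ e ∧ x ∈ f) ∨ ∃ x y, x ∈ e ∧ y ∈ f ∧ G.Adj x y

/-- Two disjoint edges `zx`, `z'x'` of a strong clique can only be joined by `xx'` when `z` and
`z'` have no neighbours among the vertices of the other edge. -/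
lemma adj_of_isolated {V : Type} {H : SimpleGraph V} {S : Set (Sym2 V)} {T T' : Set V}
    (hS : IsStrongCliqueSet H S) (hdisj : T ∩ T' = ∅) {z x z' x' : V}
    (hz : z ∈ T) (hx : x ∈ T) (hz' : z' ∈ T') (hx' : x' ∈ T')
    (he : s(z, x) ∈ S) (hf : s(z', x') ∈ S)
    (hiso : ∀ y ∈ T', ¬ H.Adj z y) (hiso' : ∀ y ∈ T, ¬ H.Adj z' y) : H.Adj x x' := by
  have hne : ∀ u ∈ T, u ∉ T' := fun u hu hu' => by
    have : u ∈ T ∩ T' := ⟨hu, hu'⟩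
    simp [hdisj] at this
  have hno : ¬ ∃ u, u ∈ s(z, x) ∧ u ∈ s(z', x') := by
    rintro ⟨u, hu, hu'⟩
    rw [Sym2.mem_iff] at hu hu'
    have h1 : u ∈ T := by rcases hu with rfl | rfl <;> assumption
    have h2 : u ∈ T' := by rcases hu' with rfl | rfl <;> assumption
    exact hne u h1 h2
  have hef : s(z, x) ≠ s(z', x') := fun h =>
    hno ⟨z, Sym2.mem_mk_left z x, h ▸ Sym2.mem_mk_left z x⟩
  obtain h | ⟨u, v, hu, hv, huv⟩ := hS.2 _ he _ hf hef
  · exact absurd h hno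
  · rw [Sym2.mem_iff] at hu hv
    rcases hu with rfl | rfl
    · rcases hv with rfl | rfl
      · exact absurd huv (hiso _ hz')
      · exact absurd huv (hiso _ hx')
    · rcases hv with rfl | rfl
      · exact absurd huv.symm (hiso' _ hx)
      · exact huv

/-- Each vertex `z` of a triangle has two adjacent companions, joined to `z` by edges of `S`. -/
lemma exists_other_two {V : Type} {H : SimpleGraph V} {S : Set (Sym2 V)} {a b c : V}
    (hT : H.Adj a b ∧ H.Adj b c ∧ H.Adj a c)
    (hab : s(a, b) ∈ S) (hbc : s(b, c) ∈ S) (hac : s(a, c) ∈ S)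
    {z : V} (hz : z ∈ ({a, b, c} : Set V)) :
    ∃ x ∈ ({a, b, c} : Set V), ∃ y ∈ ({a, b, c} : Set V),
      H.Adj x y ∧ s(z, x) ∈ S ∧ s(z, y) ∈ S := by
  obtain ⟨h1, h2, h3⟩ := hT
  rcases hz with rfl | rfl | rfl
  · exact ⟨b, by simp, c, by simp, h2, hab, hac⟩
  · exact ⟨a, by simp, c, by simp, h3, Sym2.eq_swap ▸ hab, hbc⟩
  · exact ⟨a, by simp, b, by simp, h1, Sym2.eq_swap ▸ hac, Sym2.eq_swap ▸ hbc⟩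

/-- For two vertex-disjoint triangles `{a,b,c}` and `{a',b',c'}` of `H` whose six edges all
belong to a common strong clique of `H`, either one of the triangles dominates the other
(each of its vertices is adjacent to a vertex of the other triangle), or some two vertices
of the first and two vertices of the second together induce a `K₄`. -/
theorem stmt_19 {V : Type} [Fintype V] (H : SimpleGraph V)
    (a b c a' b' c' : V)
    (hτ : H.Adj a b ∧ H.Adj b c ∧ H.Adj a c)
    (hτ' : H.Adj a' b' ∧ H.Adj b' c' ∧ H.Adj a' c')
    (hdisj : ({a, b, c} : Set V) ∩ ({a', b', c'} : Set V) = ∅)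
    (hS : ∃ S : Set (Sym2 V), IsStrongCliqueSet H S ∧
      s(a, b) ∈ S ∧ s(b, c) ∈ S ∧ s(a, c) ∈ S ∧
      s(a', b') ∈ S ∧ s(b', c') ∈ S ∧ s(a', c') ∈ S) :
    ((∀ x ∈ ({a, b, c} : Set V), ∃ y ∈ ({a', b', c'} : Set V), H.Adj x y) ∨
     (∀ x ∈ ({a', b', c'} : Set V), ∃ y ∈ ({a, b, c} : Set V), H.Adj x y)) ∨
    (∃ x ∈ ({a, b, c} : Set V), ∃ y ∈ ({a, b, c} : Set V),
     ∃ x' ∈ ({a', b', c'} : Set V), ∃ y' ∈ ({a', b', c'} : Set V),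
      x ≠ y ∧ x' ≠ y' ∧
      H.Adj x y ∧ H.Adj x' y' ∧ H.Adj x x' ∧ H.Adj x y' ∧ H.Adj y x' ∧ H.Adj y y') := by
  obtain ⟨S, hS, hab, hbc, hac, hab', hbc', hac'⟩ := hS
  rw [or_iff_not_imp_left]
  intro hdom
  push Not at hdom
  obtain ⟨⟨z, hz, hiso⟩, z', hz', hiso'⟩ := hdom
  obtain ⟨x, hx, y, hy, hxy, hzx, hzy⟩ := exists_other_two hτ hab hbc hac hz
  obtain ⟨x', hx', y', hy', hxy', hzx', hzy'⟩ := exists_other_two hτ' hab' hbc' hac' hz'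
  exact ⟨x, hx, y, hy, x', hx', y', hy', hxy.ne, hxy'.ne, hxy, hxy',
    adj_of_isolated hS hdisj hz hx hz' hx' hzx hzx' hiso hiso',
    adj_of_isolated hS hdisj hz hx hz' hy' hzx hzy' hiso hiso',
    adj_of_isolated hS hdisj hz hy hz' hx' hzy hzx' hiso hiso',
    adj_of_isolated hS hdisj hz hy hz' hy' hzy hzy' hiso hiso'⟩
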